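/- Let G be a finite group and N a solvable normal subgroup of G such that G/N is isomorphic to the alternating group A₅. Suppose there is a prime p ∉ {2,3,5} dividing |N|, and that G contains no element of order 3p and no element of order 5p. Let q be a prime not dividing |G|, let V be a finite vector space over the field with q elements, and let ρ : G → GL(V) be a representation. If no element of order 3 of G has a nonzero fixed vector in V, then no element of order 5 of G has a nonzero fixed vector in V. -/

import Mathlib

/-!
Write `K` for the kernel of the map of `G` onto `A₅`.

If `r` is an odd prime dividing the order of a perfect group `A`, and the elements of order `r` act
without nonzero fixed vectors, then Sylow `r`-subgroups are cyclic. If `r` divided the order of the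
kernel of a map onto `A`, then by the Frattini argument the centralizer of some `z` of order `r` in
this kernel would again map onto `A`, which contradicts the transfer into a cyclic Sylow subgroup of
the centralizer. With `r = 3` this applies to `V` itself. With `r = 5` it applies to conjugation on
an elementary abelian normal `p`-subgroup, which is reached by induction on `|G|`.

Hence `3` and `5` do not divide `|K|`, and generators of order 3 of `A₅` with product of order 5
lift to `a`, `b` of order 3. Since `ρ a + ρ a⁻¹ = ρ b + ρ b⁻¹ = -1`, the sum
`ρ (a * b) + ρ (a * b)⁻¹` commutes with `ρ a` and `ρ b`. If a power `y` of `a * b` of order 5 fixes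
`v`, then `ρ y + ρ y⁻¹` is multiplication by 2 on the span of the translates of `v` under `⟨a, b⟩`,
so `y` fixes all of them. The stabilizer of `v` therefore contains the conjugates of `y` under
`⟨a, b⟩`, so it maps onto `A₅`, contains an element of order 3, and `v = 0`.
-/

open scoped IsMulCommutative commutatorElement

section PGroup

variable {P : Type*} [Group P] {p : ℕ}

theorem isCyclic_of_isCyclic_map_subtype {K : Subgroup P} {H : Subgroup K}
    (h : IsCyclic (H.map K.subtype)) : IsCyclic H :=
  (H.equivMapOfInjective _ K.subtype_injective).isCyclic.2 h

theorem commutatorElement_pow_left {x y : P} (h : Commute ⁅x, y⁆ x) (n : ℕ) :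
    ⁅x ^ n, y⁆ = ⁅x, y⁆ ^ n := by
  induction n with
  | zero => simp
  | succ n ih =>
    rw [pow_succ', commutatorElement_mul_left_eq_conj_mul, ih, ← (h.pow_left n).eq,
      mul_inv_cancel_right, pow_succ]

theorem mul_pow_of_commute_commutatorElement {x y : P} (hx : Commute ⁅y, x⁆ x)
    (hy : Commute ⁅y, x⁆ y) (n : ℕ) : (x * y) ^ n = x ^ n * y ^ n * ⁅y, x⁆ ^ n.choose 2 := by
  induction n with
  | zero => simp
  | succ n ih =>
    have hswap : y ^ n * x = x * y ^ n * ⁅y, x⁆ ^ n := by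
      rw [← ((hx.mul_right (hy.pow_right n)).pow_left n).eq, ← commutatorElement_pow_left hy,
        commutatorElement_def]
      group
    calc (x * y) ^ (n + 1)
        = x ^ n * y ^ n * (⁅y, x⁆ ^ n.choose 2 * (x * y)) := by rw [pow_succ, ih, mul_assoc]
      _ = x ^ n * (y ^ n * x) * y * ⁅y, x⁆ ^ n.choose 2 := by
        rw [((hx.mul_right hy).pow_left _).eq]; simp only [mul_assoc]
      _ = x ^ n * x * y ^ n * (⁅y, x⁆ ^ n * y) * ⁅y, x⁆ ^ n.choose 2 := by
        rw [hswap]; simp only [mul_assoc]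
      _ = x ^ (n + 1) * y ^ (n + 1) * ⁅y, x⁆ ^ (n + 1).choose 2 := by
        rw [(hy.pow_left n).eq, Nat.choose_succ_succ' n 1, Nat.choose_one_right,
          pow_add ⁅y, x⁆, pow_succ x, pow_succ y]
        simp only [mul_assoc]

theorem commutator_le_of_index_eq_prime [Fact p.Prime] {B : Subgroup P} [B.Normal]
    (hB : B.index = p) : commutator P ≤ B := by
  have : IsCyclic (P ⧸ B) := isCyclic_of_prime_card (p := p) hB
  exact Subgroup.Normal.quotient_commutative_iff_commutator_le.1 inferInstance

theorem mul_pow_prime_of_forall_mem_normal [Fact p.Prime] (hp2 : p ≠ 2)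
    (hP : ∀ x : P, ∃ B : Subgroup P, x ∈ B ∧ B.Normal ∧ IsMulCommutative B ∧ B.index = p)
    (x y : P) : (x * y) ^ p = x ^ p * y ^ p := by
  have hp : p.Prime := Fact.out
  have hcentral (a b c : P) : Commute ⁅a, b⁆ c ∧ Commute (a ^ p) c := by
    obtain ⟨B, hcB, hBn, hBc, hBi⟩ := hP c
    have hcommute {d : P} (hd : d ∈ B) : Commute d c :=
      congrArg Subtype.val (mul_comm (⟨d, hd⟩ : B) ⟨c, hcB⟩)
    have hab : ⁅a, b⁆ ∈ commutator P :=
      Subgroup.commutator_mem_commutator (Subgroup.mem_top a) (Subgroup.mem_top b)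
    exact ⟨hcommute (commutator_le_of_index_eq_prime hBi hab), hcommute (hBi ▸ B.pow_index_mem a)⟩
  have hpow : ⁅y, x⁆ ^ p = 1 := by
    rw [← commutatorElement_pow_left (hcentral y x y).1]
    exact (hcentral y x x).2.commutator_eq
  obtain ⟨k, hk⟩ : p ∣ p.choose 2 :=
    hp.dvd_choose_self two_ne_zero (lt_of_le_of_ne hp.two_le hp2.symm)
  rw [mul_pow_of_commute_commutatorElement (hcentral y x x).1 (hcentral y x y).1, hk, pow_mul,
    hpow, one_pow, mul_one]

theorem card_le_prime_of_forall_pow_eq_one [Finite P] [Fact p.Prime] (hP : IsPGroup p P)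
    (hpow : ∀ x : P, x ^ p = 1) (hsq : ∀ H : Subgroup P, Nat.card H = p ^ 2 → IsCyclic H) :
    Nat.card P ≤ p := by
  have hp : p.Prime := Fact.out
  obtain ⟨n, hn⟩ := IsPGroup.iff_card.1 hP
  by_contra! hlt
  obtain ⟨H, hH⟩ : ∃ H : Subgroup P, Nat.card H = p ^ 2 := by
    refine Sylow.exists_subgroup_card_pow_prime p ?_
    rw [hn] at hlt ⊢
    exact pow_dvd_pow p ((pow_lt_pow_iff_right₀ hp.one_lt).1 (by simpa using hlt))
  have hexp : Monoid.exponent H ∣ p :=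
    Monoid.exponent_dvd_of_forall_pow_eq_one fun x => Subtype.ext (hpow x)
  have hcyc := hsq H hH
  rw [IsCyclic.exponent_eq_card, hH] at hexp
  exact absurd (Nat.le_of_dvd hp.pos hexp) (lt_self_pow₀ hp.one_lt one_lt_two).not_ge

theorem exists_normal_index_eq_prime_of_mem [Finite P] [Fact p.Prime] (hP : IsPGroup p P)
    (hnc : ¬ IsCyclic P) (x : P) : ∃ B : Subgroup P, x ∈ B ∧ B.Normal ∧ B.index = p := by
  have hp : p.Prime := Fact.out
  obtain ⟨n, hn⟩ := IsPGroup.iff_card.1 hP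
  obtain ⟨m, hm⟩ := IsPGroup.iff_card.1 (hP.to_subgroup (Subgroup.zpowers x))
  have hmn : m < n := by
    rw [← pow_lt_pow_iff_right₀ hp.one_lt, ← hn, ← hm]
    refine lt_of_le_of_ne (Subgroup.card_le_card_group _) fun h => ?_
    rw [Nat.card_zpowers] at h
    exact hnc (isCyclic_of_orderOf_eq_card x h)
  obtain ⟨l, rfl⟩ : ∃ l, n = l + 1 := ⟨n - 1, by lia⟩
  obtain ⟨B, hB, hxB⟩ := Sylow.exists_subgroup_card_pow_prime_le p
    (hn ▸ pow_dvd_pow p l.le_succ) (Subgroup.zpowers x) hm (by lia)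
  have hindex : B.index = p := by
    have h := B.card_mul_index
    rw [hB, hn, pow_succ] at h
    exact Nat.eq_of_mul_eq_mul_left (pow_pos hp.pos l) h
  refine ⟨B, hxB (Subgroup.mem_zpowers x), Subgroup.normal_of_index_eq_minFac_card ?_, hindex⟩
  rw [hindex, hn, hp.pow_minFac l.succ_ne_zero]

theorem isCyclic_of_forall_isCyclic_of_ne_top [Finite P] [Fact p.Prime] (hP : IsPGroup p P)
    (hp2 : p ≠ 2) (hsq : ∀ H : Subgroup P, Nat.card H = p ^ 2 → IsCyclic H)
    (hproper : ∀ H : Subgroup P, H ≠ ⊤ → IsCyclic H) : IsCyclic P := by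
  have hp : p.Prime := Fact.out
  by_contra hnc
  have hmax (x : P) : ∃ B : Subgroup P, x ∈ B ∧ B.Normal ∧ IsCyclic B ∧ B.index = p := by
    obtain ⟨B, hxB, hBn, hB⟩ := exists_normal_index_eq_prime_of_mem hP hnc x
    exact ⟨B, hxB, hBn, hproper B fun h => hp.ne_one (by simpa [h] using hB.symm), hB⟩
  let φ : P →* P :=
    { toFun x := x ^ p
      map_one' := one_pow p
      map_mul' := mul_pow_prime_of_forall_mem_normal hp2 fun x =>
        have ⟨B, hxB, hBn, hBc, hB⟩ := hmax x
        ⟨B, hxB, hBn, inferInstance, hB⟩ }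
  have hker : Nat.card φ.ker ≤ p := by
    refine card_le_prime_of_forall_pow_eq_one (hP.to_subgroup _) (fun x => Subtype.ext x.2)
      fun H hH => ?_
    exact isCyclic_of_isCyclic_map_subtype (hsq _ (by rw [Subgroup.card_subtype, hH]))
  obtain ⟨B, -, hBn, hBc, hB⟩ := hmax 1
  have hrange : φ.range = B := by
    refine Subgroup.eq_of_le_of_card_ge ?_ ?_
    · rintro _ ⟨x, rfl⟩
      subst hB
      exact B.pow_index_mem x
    · rw [← Subgroup.index_ker]
      refine Nat.le_of_mul_le_mul_left ?_ hp.pos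
      calc p * Nat.card B = Nat.card φ.ker * φ.ker.index := by
            rw [φ.ker.card_mul_index, mul_comm, ← hB, B.card_mul_index]
        _ ≤ p * φ.ker.index := Nat.mul_le_mul_right _ hker
  obtain ⟨⟨b, hbB⟩, hb⟩ := hBc.exists_ofOrder_eq_natCard
  obtain ⟨x, rfl⟩ := hrange.ge hbB
  rw [Subgroup.orderOf_mk] at hb
  rcases (hP.to_subgroup B).card_eq_or_dvd with hB1 | hpB
  · exact hnc (isCyclic_of_prime_card (p := p) (by rw [← B.card_mul_index, hB1, hB, one_mul]))
  · have hpx : p ∣ orderOf x := (hb ▸ hpB).trans (orderOf_map_dvd φ x)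
    have hxp : orderOf x / p = Nat.card B := by rw [← orderOf_pow_of_dvd hp.ne_zero hpx, ← hb]; rfl
    refine hnc (isCyclic_of_orderOf_eq_card x ?_)
    rw [← B.card_mul_index, hB, ← hxp, Nat.div_mul_cancel hpx]

theorem isCyclic_of_forall_card_eq_prime_sq [Finite P] [Fact p.Prime] (hP : IsPGroup p P)
    (hp2 : p ≠ 2) (hsq : ∀ H : Subgroup P, Nat.card H = p ^ 2 → IsCyclic H) : IsCyclic P := by
  suffices h : ∀ (n : ℕ) (K : Subgroup P), Nat.card K = n → IsCyclic K by
    have := h _ ⊤ rfl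
    exact Subgroup.topEquiv.isCyclic.1 this
  intro n
  induction n using Nat.strong_induction_on with
  | _ n ih =>
    intro K hK
    refine isCyclic_of_forall_isCyclic_of_ne_top (hP.to_subgroup K) hp2 (fun H hH =>
      isCyclic_of_isCyclic_map_subtype (hsq _ (by rw [Subgroup.card_subtype, hH]))) fun H hH =>
      isCyclic_of_isCyclic_map_subtype ?_
    refine ih _ ?_ _ rfl
    rw [Subgroup.card_subtype, ← hK]
    exact lt_of_le_of_ne (Subgroup.card_le_card_group H) fun h => hH (H.eq_top_of_card_eq h)

end PGroup

/-- The elements of order `n` of `G` act without nonzero fixed vectors. -/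
def FixedPointFreeOnOrder {k G V : Type*} [Semiring k] [Monoid G] [AddCommMonoid V] [Module k V]
    (ρ : Representation k G V) (n : ℕ) : Prop :=
  ∀ g : G, orderOf g = n → ∀ v : V, ρ g v = v → v = 0

namespace FixedPointFreeOnOrder

section Monoid

variable {k G V : Type*} [Semiring k] [Monoid G] [AddCommGroup V] [Module k V]
  {ρ : Representation k G V} {n : ℕ}

theorem comp {H : Type*} [Monoid H] (h : FixedPointFreeOnOrder ρ n) {φ : H →* G}
    (hφ : Function.Injective φ) : FixedPointFreeOnOrder (ρ.comp φ) n := fun g hg =>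
  h (φ g) ((orderOf_injective φ hφ g).trans hg)

theorem sum_range_pow_apply_eq_zero (h : FixedPointFreeOnOrder ρ n) {g : G} (hg : orderOf g = n)
    (v : V) : ∑ i ∈ Finset.range n, ρ (g ^ i) v = 0 := by
  refine h g hg _ ?_
  have hgn : g ^ n = 1 := hg ▸ pow_orderOf_eq_one g
  have hshift : ∑ i ∈ Finset.range n, ρ (g ^ (i + 1)) v + ρ (g ^ 0) v =
      ∑ i ∈ Finset.range n, ρ (g ^ i) v + ρ (g ^ n) v := by
    rw [← Finset.sum_range_succ' fun i => ρ (g ^ i) v, Finset.sum_range_succ]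
  rw [hgn, pow_zero] at hshift
  simpa only [map_sum, pow_succ', map_mul, Module.End.mul_apply] using add_right_cancel hshift

theorem eq_zero_of_nsmul_eq_zero {p : ℕ} (hp : p.Prime) (h : FixedPointFreeOnOrder ρ p)
    {g : G} (hg : orderOf g = p) {v : V} (hv : p • v = 0) : v = 0 := by
  have hinj : Function.Injective (ρ g - 1 : Module.End k V) :=
    (injective_iff_map_eq_zero _).2 fun w hw => h g hg w (sub_eq_zero.1 hw)
  -- Modulo `p` one has `(ρ g - 1) ^ p = ρ g ^ p - 1 = 0`.
  have hpow : ((ρ g - 1) ^ p) v = 0 := by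
    obtain ⟨T, hT⟩ := (Commute.one_right (ρ g - 1)).exists_add_pow_prime_eq hp
    rw [sub_add_cancel, ← map_pow, orderOf_dvd_iff_pow_eq_one.1 hg.dvd, map_one, one_pow, mul_one,
      mul_assoc, ← nsmul_eq_mul] at hT
    have hTv := congrArg (· v) hT
    simp only [LinearMap.add_apply, LinearMap.smul_apply, ← map_nsmul, Module.End.mul_apply, hv,
      map_zero, add_zero] at hTv
    exact right_eq_add.1 hTv
  rw [Module.End.pow_apply] at hpow
  exact hinj.iterate p (hpow.trans (by rw [← Module.End.pow_apply, map_zero]))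

end Monoid

section Group

variable {k G V : Type*} [Semiring k] [Group G] [AddCommGroup V] [Module k V]
  {ρ : Representation k G V} {r : ℕ} [Fact r.Prime]

theorem mem_zpowers_of_commute [Nontrivial V] (h : FixedPointFreeOnOrder ρ r) {x y : G}
    (hx : orderOf x = r) (hy : orderOf y = r) (hxy : Commute x y) : y ∈ Subgroup.zpowers x := by
  have hr : r.Prime := Fact.out
  by_contra hyx
  obtain ⟨v, hv⟩ := exists_ne (0 : V)
  have hyxi (i : ℕ) : Commute y (x ^ i) := hxy.symm.pow_right i
  have horder (i : ℕ) : orderOf (y * x ^ i) = r := by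
    refine orderOf_eq_prime ?_ fun h1 => hyx ?_
    · rw [(hyxi i).mul_pow, ← hy, pow_orderOf_eq_one, one_mul, hy, ← hx, pow_right_comm,
        pow_orderOf_eq_one, one_pow]
    · exact eq_inv_of_mul_eq_one_left h1 ▸ inv_mem (Subgroup.npow_mem_zpowers x i)
  -- Sum the norm relations of the `r` subgroups `⟨y x^i⟩`; outside the identity, the terms group
  -- into translates of norm relations of `⟨x⟩`, so that only `r • v` remains.
  have hsum : ∑ j ∈ Finset.range r, ∑ i ∈ Finset.range r, ρ ((y * x ^ i) ^ j) v = 0 := by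
    rw [Finset.sum_comm]
    exact Finset.sum_eq_zero fun i _ => h.sum_range_pow_apply_eq_zero (horder i) v
  have hzero (j : ℕ) (hj : j ∈ Finset.range r) (hj0 : j ≠ 0) :
      ∑ i ∈ Finset.range r, ρ ((y * x ^ i) ^ j) v = 0 := by
    have hxj : orderOf (x ^ j) = r := by
      have hcop := Nat.coprime_of_lt_prime hj0 (Finset.mem_range.1 hj) hr
      rw [Nat.Coprime.orderOf_pow (hx ▸ hcop), hx]
    have hterm (i : ℕ) : ρ ((y * x ^ i) ^ j) v = ρ (y ^ j) (ρ ((x ^ j) ^ i) v) := by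
      rw [(hyxi i).mul_pow, pow_right_comm, map_mul, Module.End.mul_apply]
    simp only [hterm, ← map_sum, h.sum_range_pow_apply_eq_zero hxj, map_zero]
  rw [Finset.sum_eq_single_of_mem 0 (Finset.mem_range.2 hr.pos) hzero] at hsum
  exact hv (h.eq_zero_of_nsmul_eq_zero hr hx (by simpa using hsum))

theorem isCyclic_of_card_eq_sq [Nontrivial V] (h : FixedPointFreeOnOrder ρ r)
    (hG : Nat.card G = r ^ 2) : IsCyclic G := by
  have hr : r.Prime := Fact.out
  by_contra hnc
  have hexp := (not_isCyclic_iff_exponent_eq_prime hr hG).1 hnc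
  have horder {x : G} (hx : x ≠ 1) : orderOf x = r :=
    orderOf_eq_prime (hexp ▸ Monoid.pow_exponent_eq_one x) hx
  have hcomm := IsPGroup.isMulCommutative_of_card_eq_prime_sq hG
  have : Nontrivial G := not_subsingleton_iff_nontrivial.1 fun _ => hnc inferInstance
  obtain ⟨x, hx⟩ := exists_ne (1 : G)
  refine hnc ⟨x, fun y => ?_⟩
  rcases eq_or_ne y 1 with rfl | hy
  · exact one_mem (Subgroup.zpowers x)
  · exact h.mem_zpowers_of_commute (horder hx) (horder hy) (mul_comm' x y)

theorem isCyclic_of_isPGroup [Finite G] [Nontrivial V] (h : FixedPointFreeOnOrder ρ r)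
    (hr2 : r ≠ 2) (hG : IsPGroup r G) : IsCyclic G :=
  isCyclic_of_forall_card_eq_prime_sq hG hr2 fun H hH =>
    (h.comp H.subtype_injective).isCyclic_of_card_eq_sq hH

end Group

end FixedPointFreeOnOrder

section Perfect

variable {G A : Type*} [Group G] [Group A] {f : G →* A}

theorem commutator_normalizer_le_centralizer {Z : Subgroup G} [IsCyclic Z] :
    ⁅Subgroup.normalizer (Z : Set G), Subgroup.normalizer (Z : Set G)⁆ ≤
      Subgroup.centralizer (Z : Set G) := by
  rw [Subgroup.commutator_le]
  intro a ha b hb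
  let α := Z.normalizerMonoidHom ⟨a, ha⟩
  let β := Z.normalizerMonoidHom ⟨b, hb⟩
  have hcomm : α * β = β * α := by
    obtain ⟨m, hm⟩ := MonoidHom.map_cyclic α.toMonoidHom
    ext z
    have hβz : α (β z) = β (α z) := by
      calc α (β z) = β z ^ m := hm (β z)
        _ = β (z ^ m) := (map_zpow β z m).symm
        _ = β (α z) := congrArg β (hm z).symm
    exact congrArg Subtype.val hβz
  have hker : ⁅(⟨a, ha⟩ : Subgroup.normalizer (Z : Set G)), ⟨b, hb⟩⁆ ∈
      Z.normalizerMonoidHom.ker := by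
    rw [MonoidHom.mem_ker, map_commutatorElement, commutatorElement_eq_one_iff_mul_comm]
    exact hcomm
  rwa [Subgroup.normalizerMonoidHom_ker, Subgroup.mem_subgroupOf] at hker

theorem map_centralizer_eq_top (hA : commutator A = ⊤) {Z : Subgroup G} [IsCyclic Z]
    (hZ : (Subgroup.normalizer (Z : Set G)).map f = ⊤) :
    (Subgroup.centralizer (Z : Set G)).map f = ⊤ := by
  rw [eq_top_iff]
  calc ⊤ = ⁅(Subgroup.normalizer (Z : Set G)).map f, (Subgroup.normalizer (Z : Set G)).map f⁆ := by
        rw [hZ, ← commutator_def, hA]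
    _ = ⁅Subgroup.normalizer (Z : Set G), Subgroup.normalizer (Z : Set G)⁆.map f :=
        (Subgroup.map_commutator _ _ f).symm
    _ ≤ _ := Subgroup.map_mono commutator_normalizer_le_centralizer

theorem map_normalizer_sylow_ker_eq_top (hf : Function.Surjective f) {r : ℕ} [Fact r.Prime]
    [Finite f.ker] (Q : Sylow r f.ker) :
    (Subgroup.normalizer ((Q : Subgroup f.ker).map f.ker.subtype : Set G)).map f = ⊤ := by
  have h := congrArg (Subgroup.map f) Q.normalizer_sup_eq_top
  rwa [Subgroup.map_sup, (Subgroup.map_eq_bot_iff f.ker).2 le_rfl, sup_bot_eq,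
    Subgroup.map_top_of_surjective f hf] at h

end Perfect

theorem exists_mem_center_orderOf_eq_prime {P : Type*} [Group P] [Finite P] [Nontrivial P] {p : ℕ}
    [Fact p.Prime] (hP : IsPGroup p P) : ∃ z ∈ Subgroup.center P, orderOf z = p := by
  have hZ := hP.center_nontrivial
  obtain ⟨z, hz⟩ := exists_prime_orderOf_dvd_card' p
    ((hP.to_subgroup (Subgroup.center P)).card_eq_or_dvd.resolve_left
      (Finite.one_lt_card (α := Subgroup.center P)).ne')
  exact ⟨z, z.2, (Subgroup.orderOf_coe z).trans hz⟩

namespace FixedPointFreeOnOrder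

variable {k G A V : Type*} [Semiring k] [Group G] [Group A] [AddCommGroup V] [Module k V]
  [Nontrivial V] {ρ : Representation k G V} {f : G →* A} {r : ℕ} [Fact r.Prime]

theorem normalizer_le_normalizer_zpowers (h : FixedPointFreeOnOrder ρ r) {Q : Subgroup G} {z : G}
    (hzQ : z ∈ Q) (hz : orderOf z = r) (hcomm : ∀ x ∈ Q, Commute z x) :
    Subgroup.normalizer (Q : Set G) ≤ Subgroup.normalizer (Subgroup.zpowers z : Set G) := by
  have hconj {g : G} (hg : g ∈ Subgroup.normalizer (Q : Set G)) :
      (Subgroup.zpowers z).map (MulAut.conj g).toMonoidHom ≤ Subgroup.zpowers z := by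
    rw [MonoidHom.map_zpowers, Subgroup.zpowers_le]
    exact h.mem_zpowers_of_commute hz (((MulAut.conj g).orderOf_eq z).trans hz)
      (hcomm _ ((Subgroup.mem_normalizer_iff.1 hg z).1 hzQ))
  intro g hg
  rw [Subgroup.mem_normalizer_iff]
  refine fun x => ⟨fun hx => hconj hg ⟨x, hx, rfl⟩, fun hx => ?_⟩
  simpa [mul_assoc] using hconj (inv_mem hg) ⟨_, hx, rfl⟩

theorem exists_mem_ker_map_centralizer_eq_top [Finite f.ker] (h : FixedPointFreeOnOrder ρ r)
    (hf : Function.Surjective f) (hA : commutator A = ⊤) (hr : r ∣ Nat.card f.ker) :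
    ∃ z ∈ f.ker, orderOf z = r ∧ (Subgroup.centralizer {z}).map f = ⊤ := by
  let Q : Sylow r f.ker := default
  have : Nontrivial Q := (Subgroup.nontrivial_iff_ne_bot _).2 (Q.ne_bot_of_dvd_card hr)
  obtain ⟨z, hzc, hz⟩ := exists_mem_center_orderOf_eq_prime Q.isPGroup'
  have hzG : orderOf (z : G) = r := by rw [Subgroup.orderOf_coe, Subgroup.orderOf_coe, hz]
  have hN := h.normalizer_le_normalizer_zpowers
    (Subgroup.mem_map_of_mem f.ker.subtype z.2) hzG (by
      rintro _ ⟨x, hx, rfl⟩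
      exact congrArg (fun y : Q => (y : G)) (Subgroup.mem_center_iff.1 hzc ⟨x, hx⟩).symm)
  refine ⟨z, z.1.2, hzG, ?_⟩
  rw [← Subgroup.centralizer_closure, ← Subgroup.zpowers_eq_closure]
  refine map_centralizer_eq_top hA (eq_top_iff.2 ?_)
  rw [← map_normalizer_sylow_ker_eq_top hf Q]
  exact Subgroup.map_mono hN

end FixedPointFreeOnOrder

section Transfer

theorem mem_of_pow_mem_of_coprime {G : Type*} [Group G] {H : Subgroup G} {x : G} {n : ℕ}
    (hn : n.Coprime (orderOf x)) (hx : x ^ n ∈ H) : x ∈ H := by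
  obtain ⟨m, hm⟩ := exists_pow_eq_self_of_coprime hn
  exact hm ▸ H.pow_mem hx m

theorem not_dvd_card_commutator_of_mem_center {G : Type*} [Group G] [Finite G] {r : ℕ}
    [Fact r.Prime] (P : Sylow r G) [IsCyclic P] {z : G} (hzc : z ∈ Subgroup.center G)
    (hz : orderOf z = r) : ¬ r ∣ Nat.card (commutator G) := by
  have hr : r.Prime := Fact.out
  refine P.not_dvd_card_commutator_or_not_dvd_index_commutator.resolve_right fun hindex => ?_
  have hzcomm : z ∈ commutator G := by
    refine mem_of_pow_mem_of_coprime ?_ ((commutator G).pow_index_mem z)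
    rw [hz]
    exact ((hr.coprime_iff_not_dvd).2 hindex).symm
  let _ : CommGroup P := IsCyclic.commGroup
  let τ := MonoidHom.transfer (MonoidHom.id P)
  have hτ : τ z = ⟨z ^ (P : Subgroup G).index, _⟩ :=
    MonoidHom.transfer_eq_pow (MonoidHom.id P) z fun k g _ => by
      have hgz : Commute g (z ^ k) := Commute.pow_right (Subgroup.mem_center_iff.1 hzc g) k
      rw [mul_assoc, ← hgz.eq, inv_mul_cancel_left]
  have hτ1 : τ z = 1 := Abelianization.commutator_subset_ker τ hzcomm
  have hpow : z ^ (P : Subgroup G).index = 1 := congrArg Subtype.val (hτ.symm.trans hτ1)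
  exact P.not_dvd_index (hz.symm.dvd.trans (orderOf_dvd_of_pow_eq_one hpow))

theorem card_dvd_card_of_map_eq_top {G A : Type*} [Group G] [Group A] {f : G →* A}
    {H : Subgroup G} (hH : H.map f = ⊤) : Nat.card A ∣ Nat.card H := by
  have h := H.card_map_dvd f
  rwa [hH, Subgroup.card_top] at h

theorem map_commutator_eq_top {G A : Type*} [Group G] [Group A] {f : G →* A}
    (hf : Function.Surjective f) (hA : commutator A = ⊤) : (commutator G).map f = ⊤ := by
  rw [commutator_def, Subgroup.map_commutator, Subgroup.map_top_of_surjective f hf,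
    ← commutator_def, hA]

end Transfer

namespace FixedPointFreeOnOrder

theorem not_dvd_card_ker {k G A V : Type*} [Semiring k] [Group G] [Finite G] [Group A]
    [AddCommGroup V] [Module k V] [Nontrivial V] {ρ : Representation k G V} {f : G →* A} {r : ℕ}
    [Fact r.Prime] (h : FixedPointFreeOnOrder ρ r) (hr2 : r ≠ 2) (hf : Function.Surjective f)
    (hA : commutator A = ⊤) (hrA : r ∣ Nat.card A) : ¬ r ∣ Nat.card f.ker := by
  intro hdvd
  obtain ⟨z, -, hz, hmap⟩ := h.exists_mem_ker_map_centralizer_eq_top hf hA hdvd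
  let C := Subgroup.centralizer {z}
  have hzC : z ∈ C := Subgroup.mem_centralizer_singleton_iff.2 rfl
  have hcenter : (⟨z, hzC⟩ : C) ∈ Subgroup.center C := Subgroup.mem_center_iff.2 fun c =>
    Subtype.ext (Subgroup.mem_centralizer_singleton_iff.1 c.2)
  have hfC : Function.Surjective (f.comp C.subtype) := by
    rwa [← MonoidHom.range_eq_top, MonoidHom.range_comp, Subgroup.range_subtype]
  let P : Sylow r C := default
  have hP : IsCyclic P :=
    (h.comp (φ := C.subtype.comp (P : Subgroup C).subtype)
      (C.subtype_injective.comp (P : Subgroup C).subtype_injective)).isCyclic_of_isPGroup hr2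
        P.isPGroup'
  exact not_dvd_card_commutator_of_mem_center P hcenter ((Subgroup.orderOf_mk z hzC).trans hz)
    (hrA.trans (card_dvd_card_of_map_eq_top (map_commutator_eq_top hfC hA)))

end FixedPointFreeOnOrder

section SolvableNormal

theorem exists_characteristic_isMulCommutative_ne_bot (G : Type*) [Group G] [Nontrivial G]
    [Group.IsSolvable G] :
    ∃ D : Subgroup G, D.Characteristic ∧ IsMulCommutative D ∧ D ≠ ⊥ := by
  classical
  have hsolv : ∃ n, derivedSeries G n = ⊥ := (Group.isSolvable_def G).1 inferInstance
  obtain ⟨n, hn⟩ : ∃ n, Nat.find hsolv = n + 1 := Nat.exists_eq_succ_of_ne_zero fun h0 =>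
    bot_ne_top ((Nat.find_eq_zero hsolv).1 h0).symm
  refine ⟨derivedSeries G n, inferInstance, ?_, Nat.find_min hsolv (hn ▸ n.lt_succ_self)⟩
  rw [← Subgroup.commutator_self_eq_bot_iff, ← derivedSeries_succ, ← hn]
  exact Nat.find_spec hsolv

theorem exists_normal_isMulCommutative_pow_eq_one {G : Type*} [Group G] {N : Subgroup G} [Finite N]
    [N.Normal] [Group.IsSolvable N] (hN : N ≠ ⊥) :
    ∃ (M : Subgroup G) (s : ℕ), M.Normal ∧ IsMulCommutative M ∧ M ≤ N ∧ M ≠ ⊥ ∧ s.Prime ∧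
      ∀ x ∈ M, x ^ s = 1 := by
  have := (Subgroup.nontrivial_iff_ne_bot N).2 hN
  obtain ⟨D, hDchar, hDcomm, hD⟩ := exists_characteristic_isMulCommutative_ne_bot N
  obtain ⟨s, hs, hsD⟩ := Nat.exists_prime_and_dvd (mt Subgroup.card_eq_one.1 hD)
  have := Fact.mk hs
  let T : Subgroup D := (powMonoidHom s : D →* D).ker
  have hT : T ≠ ⊥ := by
    obtain ⟨x, hx⟩ := exists_prime_orderOf_dvd_card' s hsD
    refine T.ne_bot_iff_exists_ne_one.2 ⟨⟨x, ?_⟩, ?_⟩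
    · exact orderOf_dvd_iff_pow_eq_one.1 hx.dvd
    · rintro h1
      rw [show x = 1 from congrArg Subtype.val h1, orderOf_one] at hx
      exact hs.ne_one hx.symm
  have hTchar : T.Characteristic := Subgroup.characteristic_iff_le_comap.2 fun φ x hx => by
    exact (map_pow φ x s).symm.trans ((congrArg φ hx).trans (map_one φ))
  refine ⟨(T.map D.subtype).map N.subtype, s, inferInstance, inferInstance,
    Subgroup.map_subtype_le _, ?_, hs, ?_⟩
  · rwa [Ne, Subgroup.map_eq_bot_iff_of_injective _ N.subtype_injective,
      Subgroup.map_eq_bot_iff_of_injective _ D.subtype_injective]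
  · rintro _ ⟨_, ⟨x, hx, rfl⟩, rfl⟩
    exact congrArg (fun y : D => (y : G)) hx

end SolvableNormal

section Conjugation

variable {G : Type*} [Group G]

/-- The action of `G` by conjugation on an abelian normal subgroup `M`, written additively. -/
noncomputable def conjRepresentation (M : Subgroup G) [M.Normal] [IsMulCommutative M] :
    Representation ℤ G (Additive M) :=
  (Representation.ofMulDistribMulAction (MulAut M) M).comp MulAut.conjNormal

theorem conjRepresentation_apply_eq_self_iff {M : Subgroup G} [M.Normal] [IsMulCommutative M]
    {g : G} {x : M} :
    conjRepresentation M g (Additive.ofMul x) = Additive.ofMul x ↔ Commute g x := by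
  change MulAut.conjNormal g x = x ↔ _
  rw [Subtype.ext_iff, MulAut.conjNormal_apply, mul_inv_eq_iff_eq_mul]
  rfl

theorem fixedPointFreeOnOrder_conjRepresentation {M : Subgroup G} [M.Normal] [IsMulCommutative M]
    {r s : ℕ} (hs : s.Prime) (hM : ∀ x ∈ M, x ^ s = 1) (hrs : r.Coprime s)
    (hG : ∀ g : G, orderOf g ≠ r * s) : FixedPointFreeOnOrder (conjRepresentation M) r := by
  have := Fact.mk hs
  intro g hg v hv
  by_contra hv0
  have hord : orderOf (v.toMul : G) = s := orderOf_eq_prime (hM _ v.toMul.2) fun h1 =>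
    hv0 (Subtype.ext h1)
  have hcomm : Commute g v.toMul := conjRepresentation_apply_eq_self_iff.1 hv
  have hmul := hcomm.orderOf_mul_eq_mul_orderOf_of_coprime (by rwa [hg, hord])
  rw [hg, hord] at hmul
  exact hG _ hmul

end Conjugation

theorem FixedPointFreeOnOrder.exists_orderOf_eq_mul {k G A V : Type*} [Semiring k] [Group G]
    [Finite G] [Group A] [AddCommGroup V] [Module k V] [Nontrivial V] {ρ : Representation k G V}
    {f : G →* A} {p r : ℕ} [Fact p.Prime] [Fact r.Prime] (h : FixedPointFreeOnOrder ρ p)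
    (hf : Function.Surjective f) (hA : commutator A = ⊤) (hp : p ∣ Nat.card f.ker)
    (hr : r ∣ Nat.card A) (hpr : p ≠ r) : ∃ g : G, orderOf g = p * r := by
  obtain ⟨z, -, hz, hmap⟩ := h.exists_mem_ker_map_centralizer_eq_top hf hA hp
  obtain ⟨c, hc⟩ := exists_prime_orderOf_dvd_card' r (hr.trans (card_dvd_card_of_map_eq_top hmap))
  have hcr : orderOf (c : G) = r := (Subgroup.orderOf_coe c).trans hc
  have hzc : Commute z (c : G) := Subgroup.mem_centralizer_singleton_iff.1 c.2 |>.symm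
  refine ⟨z * c, ?_⟩
  rw [hzc.orderOf_mul_eq_mul_orderOf_of_coprime
    (by rw [hz, hcr]; exact (Nat.coprime_primes Fact.out Fact.out).2 hpr), hz, hcr]

section KernelPrimes

theorem dvd_card_ker_lift {G A : Type*} [Group G] [Group A] {M : Subgroup G} [M.Normal]
    {f : G →* A} [Finite f.ker] {s : ℕ} (hM : ∀ x ∈ M, x ^ s = 1) (hMf : M ≤ f.ker) {t : ℕ}
    [Fact t.Prime] (hts : ¬ t ∣ s) (ht : t ∣ Nat.card f.ker) :
    t ∣ Nat.card (QuotientGroup.lift M f hMf).ker := by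
  obtain ⟨x, hx⟩ := exists_prime_orderOf_dvd_card' t ht
  have hxM : (x : G) ∉ M := fun hxM =>
    hts (hx ▸ Subgroup.orderOf_coe x ▸ orderOf_dvd_of_pow_eq_one (hM x hxM))
  have hxt : ((x : G) : G ⧸ M) ^ t = 1 := by
    rw [← QuotientGroup.mk_pow, ← Subgroup.coe_pow, ← hx, pow_orderOf_eq_one]
    rfl
  have hx1 : ((x : G) : G ⧸ M) ≠ 1 := mt (QuotientGroup.eq_one_iff _).1 hxM
  rw [← orderOf_eq_prime hxt hx1]
  exact Subgroup.orderOf_dvd_natCard _ x.2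

theorem not_dvd_card_ker_of_forall_orderOf_ne {G A : Type*} [Group G] [Finite G] [Group A]
    {f : G →* A} [Group.IsSolvable f.ker] (hf : Function.Surjective f) (hA : commutator A = ⊤)
    {p r : ℕ} [Fact p.Prime] [Fact r.Prime] (hr2 : r ≠ 2) (hpr : p ≠ r) (hrA : r ∣ Nat.card A)
    (hp : p ∣ Nat.card f.ker) (hG : ∀ g : G, orderOf g ≠ r * p) : ¬ r ∣ Nat.card f.ker := by
  induction hn : Nat.card G using Nat.strong_induction_on generalizing G with | _ n ih =>
  have hker : f.ker ≠ ⊥ := fun hbot =>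
    (Fact.out : p.Prime).not_dvd_one (by rwa [hbot, Subgroup.card_bot] at hp)
  obtain ⟨M, s, _, _, hMf, hM, hs, hMs⟩ := exists_normal_isMulCommutative_pow_eq_one hker
  have : Nontrivial M := M.nontrivial_iff_ne_bot.2 hM
  have coprime_of_ne {t : ℕ} [Fact t.Prime] (hts : t ≠ s) : t.Coprime s :=
    (Nat.coprime_primes Fact.out hs).2 hts
  have not_dvd_of_ne {t : ℕ} [Fact t.Prime] (hts : t ≠ s) : ¬ t ∣ s :=
    (Fact.out : t.Prime).coprime_iff_not_dvd.1 (coprime_of_ne hts)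
  rcases eq_or_ne p s with rfl | hps
  · exact (fixedPointFreeOnOrder_conjRepresentation hs hMs (coprime_of_ne hpr.symm)
      hG).not_dvd_card_ker hr2 hf hA hrA
  rcases eq_or_ne r s with rfl | hrs
  · obtain ⟨g, hg⟩ := (fixedPointFreeOnOrder_conjRepresentation hs hMs (coprime_of_ne hpr)
      fun g => mul_comm r p ▸ hG g).exists_orderOf_eq_mul hf hA hp hrA hpr
    exact absurd (hg.trans (mul_comm p r)) (hG g)
  let f' : G ⧸ M →* A := QuotientGroup.lift M f hMf
  have hcard : Nat.card (G ⧸ M) < n := by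
    rw [← hn, M.card_eq_card_quotient_mul_card_subgroup]
    exact lt_mul_of_one_lt_right Nat.card_pos (M.one_lt_card_iff_ne_bot.2 hM)
  have hsol : Group.IsSolvable f'.ker := by
    rw [QuotientGroup.ker_lift]
    exact Group.isSolvable_of_surjective ((QuotientGroup.mk' M).subgroupMap_surjective f.ker)
  have hG' (x : G ⧸ M) : orderOf x ≠ r * p := by
    obtain ⟨g, rfl⟩ := QuotientGroup.mk'_surjective M x
    rw [← orderOf_pow_orderOf_div (orderOf_pos g).ne' (orderOf_map_dvd _ g)]
    exact hG _
  exact fun hr => ih _ hcard (QuotientGroup.lift_surjective_of_surjective M f hf hMf)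
    (dvd_card_ker_lift hMs hMf (not_dvd_of_ne hps) hp) hG' rfl
    (dvd_card_ker_lift hMs hMf (not_dvd_of_ne hrs) hr)

end KernelPrimes

section PrimeOrder

theorem exists_orderOf_eq_of_coprime_card_ker {G A : Type*} [Group G] [Group A] {f : G →* A}
    (hf : Function.Surjective f) {a : A} (ha : (Nat.card f.ker).Coprime (orderOf a)) :
    ∃ x : G, orderOf x = orderOf a ∧ f x = a := by
  obtain ⟨y, rfl⟩ := hf a
  obtain ⟨m, hm⟩ := exists_pow_eq_self_of_coprime ha
  let x := (y ^ Nat.card f.ker) ^ m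
  have hfx : f x = f y := by rw [map_pow, map_pow, hm]
  have hker : y ^ orderOf (f y) ∈ f.ker := by
    rw [MonoidHom.mem_ker, map_pow, pow_orderOf_eq_one]
  have hx : x ^ orderOf (f y) = 1 := by
    have hcard : (y ^ orderOf (f y)) ^ Nat.card f.ker = 1 :=
      congrArg Subtype.val (pow_card_eq_one' (x := (⟨_, hker⟩ : f.ker)))
    rw [pow_right_comm, pow_right_comm y, hcard, one_pow]
  exact ⟨x, (orderOf_dvd_of_pow_eq_one hx).antisymm (hfx ▸ orderOf_map_dvd f x), hfx⟩

theorem exists_pow_eq_conj {G : Type*} [Group G] [Finite G] {r : ℕ} [Fact r.Prime]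
    (hr : ¬ r ^ 2 ∣ Nat.card G) {x y : G} (hx : r ∣ orderOf x) (hy : orderOf y = r) :
    ∃ (m : ℕ) (c : G), x ^ m = c * y * c⁻¹ := by
  have exists_sylow {z : G} (hz : orderOf z = r) :
      ∃ P : Sylow r G, (P : Subgroup G) = Subgroup.zpowers z := by
    have hcard : Nat.card (Subgroup.zpowers z) = r := (Nat.card_zpowers z).trans hz
    have hP : IsPGroup r (Subgroup.zpowers z) := IsPGroup.of_card (hcard.trans (pow_one r).symm)
    refine ⟨hP.toSylow fun hindex => hr ?_, rfl⟩
    rw [← (Subgroup.zpowers z).card_mul_index, hcard, sq]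
    exact mul_dvd_mul_left r hindex
  obtain ⟨P, hP⟩ := exists_sylow (orderOf_pow_orderOf_div (orderOf_pos x).ne' hx)
  obtain ⟨Q, hQ⟩ := exists_sylow hy
  obtain ⟨c, rfl⟩ := MulAction.exists_smul_eq G Q P
  have hcy : c * y * c⁻¹ ∈ Subgroup.zpowers (x ^ (orderOf x / r)) :=
    hP ▸ Subgroup.smul_mem_pointwise_smul y (MulAut.conj c) _ (hQ ▸ Subgroup.mem_zpowers y)
  obtain ⟨m, hm⟩ := mem_powers_iff_mem_zpowers.2 hcy
  exact ⟨orderOf x / r * m, c, (pow_mul _ _ _).trans hm⟩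

end PrimeOrder

section InverseSum

variable {G R : Type*} [Group G] [Ring R] {φ : G →* R}

theorem commute_map_inv {g : G} {t : R} (h : Commute (φ g) t) : Commute (φ g⁻¹) t :=
  Commute.units_inv_left (u := φ.toHomUnits g) h

theorem commute_map_left_mul_add_inv {a b : G} (ha : ∀ x, Commute (φ a + φ a⁻¹) x)
    (hb : ∀ x, Commute (φ b + φ b⁻¹) x) : Commute (φ a) (φ (a * b) + φ (a * b)⁻¹) := by
  have ha' : φ (a * a * b) + φ b = φ (a * b * a) + φ (a * b * a⁻¹) := by
    have h := (ha (φ (a * b))).eq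
    simp only [add_mul, mul_add, ← map_mul] at h
    rwa [← mul_assoc, inv_mul_cancel_left] at h
  have hb' : φ (a * b * a⁻¹) + φ (a * b⁻¹ * a⁻¹) = φ b + φ b⁻¹ := by
    have h := congrArg (· * φ a⁻¹) (hb (φ a)).eq
    simp only [add_mul, mul_add, ← map_mul, mul_inv_cancel_right] at h
    exact h.symm
  rw [Commute, SemiconjBy, mul_add, add_mul, mul_inv_rev]
  simp only [← map_mul, ← mul_assoc, inv_mul_cancel_right]
  linear_combination (norm := abel) ha' + hb'

theorem commute_map_right_mul_add_inv {a b : G} (ha : ∀ x, Commute (φ a + φ a⁻¹) x)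
    (hb : ∀ x, Commute (φ b + φ b⁻¹) x) : Commute (φ b) (φ (a * b) + φ (a * b)⁻¹) := by
  have h := commute_map_inv (commute_map_left_mul_add_inv (φ := φ) (a := b⁻¹) (b := a⁻¹)
    (by simpa only [inv_inv, add_comm] using hb) (by simpa only [inv_inv, add_comm] using ha))
  simpa only [← mul_inv_rev, inv_inv, add_comm] using h

theorem commute_map_pow_add_inv {g : G} {x : R} (hx : Commute x (φ g + φ g⁻¹)) :
    ∀ n : ℕ, Commute x (φ (g ^ n) + φ (g ^ n)⁻¹)
  | 0 => by
    rw [pow_zero, inv_one, map_one]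
    exact (Commute.one_right x).add_right (Commute.one_right x)
  | 1 => by rwa [pow_one]
  | n + 2 => by
    have hrec : φ (g ^ (n + 2)) + φ (g ^ (n + 2))⁻¹ =
        (φ g + φ g⁻¹) * (φ (g ^ (n + 1)) + φ (g ^ (n + 1))⁻¹) - (φ (g ^ n) + φ (g ^ n)⁻¹) := by
      simp only [add_mul, mul_add, ← map_mul]
      rw [show g * g ^ (n + 1) = g ^ (n + 2) by group,
        show g * (g ^ (n + 1))⁻¹ = (g ^ n)⁻¹ by group,
        show g⁻¹ * g ^ (n + 1) = g ^ n by group,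
        show g⁻¹ * (g ^ (n + 1))⁻¹ = (g ^ (n + 2))⁻¹ by group]
      abel
    rw [hrec]
    exact (hx.mul_right (commute_map_pow_add_inv hx (n + 1))).sub_right
      (commute_map_pow_add_inv hx n)

theorem commute_map_mul_pow_add_inv {a b h : G} (ha : ∀ x, Commute (φ a + φ a⁻¹) x)
    (hb : ∀ x, Commute (φ b + φ b⁻¹) x) (hh : h ∈ Subgroup.closure {a, b}) (n : ℕ) :
    Commute (φ h) (φ ((a * b) ^ n) + φ ((a * b) ^ n)⁻¹) := by
  refine commute_map_pow_add_inv ?_ n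
  induction hh using Subgroup.closure_induction with
  | mem x hx =>
    rcases hx with rfl | rfl
    · exact commute_map_left_mul_add_inv ha hb
    · exact commute_map_right_mul_add_inv ha hb
  | one => exact map_one φ ▸ Commute.one_left _
  | mul x y _ _ hx hy => exact map_mul φ x y ▸ hx.mul_left hy
  | inv x _ hx => exact commute_map_inv hx

end InverseSum

section FixedVector

variable {k G V : Type*} [Semiring k] [Group G] [AddCommGroup V] [Module k V]
  {ρ : Representation k G V}

theorem apply_eq_self_of_apply_add_apply_inv {n : ℕ} (hn : ∀ v : V, n • v = 0 → v = 0) {y : G}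
    (hy : y ^ n = 1) {v : V} (hv : ρ y v + ρ y⁻¹ v = v + v) : ρ y v = v := by
  have hdiff : ρ y (ρ y v - v) = ρ y v - v := by
    have h := congrArg (ρ y) hv
    rw [map_add, map_add, ρ.self_inv_apply] at h
    rw [map_sub, sub_eq_sub_iff_add_eq_add, h]
  have hpow (m : ℕ) : ρ (y ^ m) v = v + m • (ρ y v - v) := by
    induction m with
    | zero => rw [pow_zero, map_one, zero_nsmul, add_zero, Module.End.one_apply]
    | succ m ih =>
      rw [pow_succ', map_mul, Module.End.mul_apply, ih, map_add, map_nsmul, hdiff, succ_nsmul]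
      abel
  refine sub_eq_zero.1 (hn _ ?_)
  have h := hpow n
  rwa [hy, map_one, Module.End.one_apply, left_eq_add] at h

theorem apply_mul_pow_apply_eq_self {a b h : G} (ha : ∀ T, Commute (ρ a + ρ a⁻¹) T)
    (hb : ∀ T, Commute (ρ b + ρ b⁻¹) T) (hh : h ∈ Subgroup.closure {a, b}) {m n : ℕ}
    (hn : ∀ v : V, n • v = 0 → v = 0) (hm : ((a * b) ^ m) ^ n = 1) {w : V}
    (hw : ρ ((a * b) ^ m) w = w) : ρ ((a * b) ^ m) (ρ h w) = ρ h w := by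
  refine apply_eq_self_of_apply_add_apply_inv hn hm ?_
  have hw' : ρ ((a * b) ^ m)⁻¹ w = w := by
    rw [← hw, ρ.inv_self_apply, hw]
  have hcomm := LinearMap.congr_fun (commute_map_mul_pow_add_inv ha hb hh m).eq w
  simpa only [Module.End.mul_apply, LinearMap.add_apply, hw, hw', map_add] using hcomm.symm

end FixedVector

theorem map_eq_top_of_conj_mem {G A : Type*} [Group G] [Group A] [IsSimpleGroup A] {f : G →* A}
    {H S : Subgroup G} (hH : H.map f = ⊤) {y : G} (hy : f y ≠ 1)
    (hS : ∀ h ∈ H, h⁻¹ * y * h ∈ S) : S.map f = ⊤ := by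
  have hle : Subgroup.normalClosure {f y} ≤ S.map f := by
    refine (Subgroup.closure_le _).2 fun x hx => ?_
    obtain ⟨_, rfl, hconj⟩ := Group.mem_conjugatesOfSet_iff.1 hx
    obtain ⟨c, rfl⟩ := isConj_iff.1 hconj
    obtain ⟨h, hh, hhc⟩ : c⁻¹ ∈ H.map f := hH ▸ Subgroup.mem_top _
    refine ⟨h⁻¹ * y * h, hS h hh, ?_⟩
    rw [map_mul, map_mul, map_inv, hhc, inv_inv]
  rcases (Subgroup.normalClosure_normal (s := {f y})).eq_bot_or_eq_top with hbot | htop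
  · exact absurd (Subgroup.closure_eq_bot_iff.1 hbot (Group.subset_conjugatesOfSet rfl)) hy
  · exact top_le_iff.1 (htop ▸ hle)

section AlternatingFive

theorem card_alternatingGroup_five : Nat.card (alternatingGroup (Fin 5)) = 60 := by
  rw [nat_card_alternatingGroup, Nat.card_fin]
  rfl

theorem eq_top_of_thirty_dvd_card {H : Subgroup (alternatingGroup (Fin 5))}
    (hH : 30 ∣ Nat.card H) : H = ⊤ := by
  have hindex : H.index ∣ 2 := by
    obtain ⟨d, hd⟩ := hH
    have h := H.card_mul_index
    rw [card_alternatingGroup_five, hd] at h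
    exact ⟨d, by lia⟩
  rcases (Nat.dvd_prime Nat.prime_two).1 hindex with h1 | h2
  · exact Subgroup.index_eq_one.1 h1
  · refine (Subgroup.normal_of_index_eq_two h2).eq_bot_or_eq_top.resolve_left fun hbot => ?_
    rw [hbot, Subgroup.card_bot] at hH
    lia

set_option maxRecDepth 100000 in
theorem exists_orderOf_eq_three_closure_eq_top :
    ∃ σ τ : alternatingGroup (Fin 5), orderOf σ = 3 ∧ orderOf τ = 3 ∧ orderOf (σ * τ) = 5 ∧
      Subgroup.closure {σ, τ} = ⊤ := by
  have : Fact (Nat.Prime 2) := ⟨Nat.prime_two⟩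
  have : Fact (Nat.Prime 3) := ⟨Nat.prime_three⟩
  have : Fact (Nat.Prime 5) := ⟨Nat.prime_five⟩
  let σ : alternatingGroup (Fin 5) := ⟨Equiv.swap 0 1 * Equiv.swap 1 2,
    Equiv.Perm.mem_alternatingGroup.2 (by decide)⟩
  let τ : alternatingGroup (Fin 5) := ⟨Equiv.swap 2 3 * Equiv.swap 3 4,
    Equiv.Perm.mem_alternatingGroup.2 (by decide)⟩
  have hσ : orderOf σ = 3 := orderOf_eq_prime (by decide) (by decide)
  have hτ : orderOf τ = 3 := orderOf_eq_prime (by decide) (by decide)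
  have hστ : orderOf (σ * τ) = 5 := orderOf_eq_prime (by decide) (by decide)
  have hinvol : orderOf (σ * σ * τ * σ * τ) = 2 := orderOf_eq_prime (by decide) (by decide)
  refine ⟨σ, τ, hσ, hτ, hστ, eq_top_of_thirty_dvd_card ?_⟩
  have hσH : σ ∈ Subgroup.closure {σ, τ} := Subgroup.subset_closure (Set.mem_insert _ _)
  have hτH : τ ∈ Subgroup.closure {σ, τ} := Subgroup.subset_closure (Set.mem_insert_of_mem _ rfl)
  have h3 := Subgroup.orderOf_dvd_natCard _ hσH
  have h5 := Subgroup.orderOf_dvd_natCard _ (mul_mem hσH hτH)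
  have h2 := Subgroup.orderOf_dvd_natCard _
    (mul_mem (mul_mem (mul_mem (mul_mem hσH hσH) hτH) hσH) hτH)
  rw [hσ] at h3
  rw [hστ] at h5
  rw [hinvol] at h2
  omega

end AlternatingFive

namespace FixedPointFreeOnOrder

section OrderThree

variable {k G V : Type*} [Semiring k] [Group G] [AddCommGroup V] [Module k V]
  {ρ : Representation k G V}

theorem commute_apply_add_apply_inv (h : FixedPointFreeOnOrder ρ 3) {g : G} (hg : orderOf g = 3)
    (T : Module.End k V) : Commute (ρ g + ρ g⁻¹) T := by
  have hg2 : g ^ 2 = g⁻¹ :=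
    eq_inv_of_mul_eq_one_left (by rw [← pow_succ, ← orderOf_dvd_iff_pow_eq_one, hg])
  have hsum : ρ g + ρ g⁻¹ = -1 := LinearMap.ext fun v => by
    have hv := h.sum_range_pow_apply_eq_zero hg v
    rw [Finset.sum_range_succ, Finset.sum_range_succ, Finset.sum_range_one, pow_zero, map_one,
      pow_one, hg2, add_assoc] at hv
    exact eq_neg_of_add_eq_zero_right hv
  exact hsum ▸ (Commute.one_left T).neg_left

theorem eq_zero_of_mul_pow_apply_eq_self [Finite G] {A : Type*} [Group A] [IsSimpleGroup A]
    (h : FixedPointFreeOnOrder ρ 3) {f : G →* A} (h3A : 3 ∣ Nat.card A) {a b : G}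
    (ha : orderOf a = 3) (hb : orderOf b = 3) (hab : (Subgroup.closure {a, b}).map f = ⊤)
    {m n : ℕ} (hn : ∀ v : V, n • v = 0 → v = 0) (hm : ((a * b) ^ m) ^ n = 1)
    (hf : f ((a * b) ^ m) ≠ 1) {v : V} (hv : ρ ((a * b) ^ m) v = v) : v = 0 := by
  let S : Subgroup G := (MulAction.stabilizer (Module.End k V)ˣ v).comap ρ.toHomUnits
  have hS : S.map f = ⊤ := map_eq_top_of_conj_mem hab hf fun x hx => by
    have hfix := apply_mul_pow_apply_eq_self (h.commute_apply_add_apply_inv ha)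
      (h.commute_apply_add_apply_inv hb) hx hn hm hv
    change ρ (x⁻¹ * (a * b) ^ m * x) v = v
    rw [map_mul, map_mul, Module.End.mul_apply, Module.End.mul_apply, hfix, ρ.inv_self_apply]
  have := Fact.mk Nat.prime_three
  obtain ⟨x, hx⟩ := exists_prime_orderOf_dvd_card' 3 (h3A.trans (card_dvd_card_of_map_eq_top hS))
  exact h x ((Subgroup.orderOf_coe x).trans hx) v x.2

theorem of_closure_eq_top [Finite G] {A : Type*} [Group A] [IsSimpleGroup A]
    (h : FixedPointFreeOnOrder ρ 3) {f : G →* A} (hf : Function.Surjective f)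
    (h3 : ¬ 3 ∣ Nat.card f.ker) {σ τ : A} (hσ : orderOf σ = 3) (hτ : orderOf τ = 3)
    (hστ : Subgroup.closure {σ, τ} = ⊤) {r : ℕ} [Fact r.Prime] (hr : orderOf (σ * τ) = r)
    (hrA : ¬ r ^ 2 ∣ Nat.card A) (hrf : ¬ r ∣ Nat.card f.ker)
    (htors : ∀ v : V, r • v = 0 → v = 0) : FixedPointFreeOnOrder ρ r := by
  have coprime_of_not_dvd {t : ℕ} (ht : t.Prime) (htf : ¬ t ∣ Nat.card f.ker) :
      (Nat.card f.ker).Coprime t := (ht.coprime_iff_not_dvd.2 htf).symm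
  have hrG : ¬ r ^ 2 ∣ Nat.card G := fun hdvd => hrA <| by
    rw [← f.ker.card_mul_index, Subgroup.index_ker, MonoidHom.range_eq_top.2 hf,
      Subgroup.card_top] at hdvd
    exact ((coprime_of_not_dvd Fact.out hrf).symm.pow_left 2).dvd_of_dvd_mul_left hdvd
  obtain ⟨a, ha, rfl⟩ := exists_orderOf_eq_of_coprime_card_ker hf (a := σ)
    (hσ ▸ coprime_of_not_dvd Nat.prime_three h3)
  obtain ⟨b, hb, rfl⟩ := exists_orderOf_eq_of_coprime_card_ker hf (a := τ)
    (hτ ▸ coprime_of_not_dvd Nat.prime_three h3)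
  have hab : (Subgroup.closure {a, b}).map f = ⊤ := by
    rw [MonoidHom.map_closure, Set.image_pair, hστ]
  intro y hy v hv
  obtain ⟨m, c, hm⟩ := exists_pow_eq_conj hrG (hr ▸ map_mul f a b ▸ orderOf_map_dvd f (a * b)) hy
  have hcy : orderOf (c * y * c⁻¹) = r := (MulEquiv.orderOf_eq (MulAut.conj c) y).trans hy
  have hcv : ρ c v = 0 := by
    refine h.eq_zero_of_mul_pow_apply_eq_self (hσ ▸ orderOf_dvd_natCard _) (ha.trans hσ)
      (hb.trans hτ) hab htors (m := m) ?_ (fun h1 => hrf ?_) ?_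
    · rw [hm, ← hcy, pow_orderOf_eq_one]
    · exact hcy ▸ hm ▸ Subgroup.orderOf_dvd_natCard _ h1
    · rw [hm, map_mul, map_mul, Module.End.mul_apply, Module.End.mul_apply, ρ.inv_self_apply, hv]
  rw [← ρ.inv_self_apply c v, hcv, map_zero]

end OrderThree

end FixedPointFreeOnOrder

theorem order3_fpf_implies_order5_fpf_general {G : Type*} [Group G] [Finite G] (N : Subgroup G)
    [N.Normal] [Group.IsSolvable N] (hquot : Nonempty ((G ⧸ N) ≃* alternatingGroup (Fin 5)))
    {p : ℕ} (hp : p.Prime) (hp5 : p ≠ 5) (hpN : p ∣ Nat.card N)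
    (h5p : ¬ ∃ g : G, orderOf g = 5 * p) {k V : Type*} [Semiring k] [AddCommGroup V] [Module k V]
    {ρ : Representation k G V} (h5 : ∀ v : V, 5 • v = 0 → v = 0)
    (h3 : FixedPointFreeOnOrder ρ 3) : FixedPointFreeOnOrder ρ 5 := by
  have := Fact.mk hp
  have := Fact.mk Nat.prime_three
  have := Fact.mk Nat.prime_five
  rcases subsingleton_or_nontrivial V with hV | hV
  · exact fun _ _ v _ => Subsingleton.elim v 0
  obtain ⟨e⟩ := hquot
  let f : G →* alternatingGroup (Fin 5) := e.toMonoidHom.comp (QuotientGroup.mk' N)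
  have hf : Function.Surjective f := e.surjective.comp (QuotientGroup.mk'_surjective N)
  have hker : f.ker = N := (MonoidHom.ker_mulEquiv_comp _ e).trans (QuotientGroup.ker_mk' N)
  have hA : commutator (alternatingGroup (Fin 5)) = ⊤ :=
    commutator_alternatingGroup_eq_top (Nat.card_fin 5).ge
  have dvd_card {d : ℕ} (hd : d ∣ 60) : d ∣ Nat.card (alternatingGroup (Fin 5)) :=
    card_alternatingGroup_five ▸ hd
  have h3f : ¬ 3 ∣ Nat.card f.ker := h3.not_dvd_card_ker (by decide) hf hA (dvd_card (by decide))
  have hsol : Group.IsSolvable f.ker := by rwa [hker]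
  have h5f : ¬ 5 ∣ Nat.card f.ker :=
    not_dvd_card_ker_of_forall_orderOf_ne hf hA (by decide) hp5 (dvd_card (by decide))
      (by rwa [hker]) (not_exists.1 h5p)
  obtain ⟨σ, τ, hσ, hτ, hστ, hgen⟩ := exists_orderOf_eq_three_closure_eq_top
  refine h3.of_closure_eq_top hf h3f hσ hτ hgen hστ ?_ h5f h5
  rw [card_alternatingGroup_five]
  decide

theorem five_dvd_card_of_quotient_mulEquiv {G : Type*} [Group G] (N : Subgroup G) [N.Normal]
    (hquot : Nonempty ((G ⧸ N) ≃* alternatingGroup (Fin 5))) : 5 ∣ Nat.card G := by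
  obtain ⟨e⟩ := hquot
  refine dvd_trans ?_ N.card_quotient_dvd_card
  rw [Nat.card_congr e.toEquiv, card_alternatingGroup_five]
  decide

theorem eq_zero_of_nsmul_eq_zero_of_not_dvd {q n : ℕ} [Fact q.Prime] (hn : ¬ q ∣ n) {V : Type*}
    [AddCommGroup V] [Module (ZMod q) V] {v : V} (hv : n • v = 0) : v = 0 := by
  rw [← Nat.cast_smul_eq_nsmul (ZMod q)] at hv
  exact (smul_eq_zero.1 hv).resolve_left (mt (ZMod.natCast_eq_zero_iff n q).1 hn)

/-- Let `N` be a solvable normal subgroup of a finite group `G` with `G/N ≅ A₅`,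
let `p ∉ {2,3,5}` be a prime dividing `|N|`, and suppose `G` has no elements of
orders `3p` and `5p`. If, for a representation of `G` over a field of prime order
`q` coprime to `|G|`, all elements of order 3 act fixed point freely, then so do
all elements of order 5. -/
theorem order3_fpf_implies_order5_fpf
    (G : Type*) [Group G] [Finite G]
    (N : Subgroup G) (hNn : N.Normal) (hNs : IsSolvable N)
    (hquot : haveI := hNn
      Nonempty ((G ⧸ N) ≃* alternatingGroup (Fin 5)))
    (p : ℕ) (hp : p.Prime) (hp' : p ∉ ({2, 3, 5} : Set ℕ)) (hpN : p ∣ Nat.card N)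
    (h3p : ¬ ∃ g : G, orderOf g = 3 * p)
    (h5p : ¬ ∃ g : G, orderOf g = 5 * p)
    (q : ℕ) (hq : q.Prime) (hqG : ¬ q ∣ Nat.card G)
    (V : Type*) [AddCommGroup V] [Module (ZMod q) V] [Finite V]
    (ρ : Representation (ZMod q) G V)
    (h3 : ∀ g : G, orderOf g = 3 → ∀ v : V, ρ g v = v → v = 0) :
    ∀ g : G, orderOf g = 5 → ∀ v : V, ρ g v = v → v = 0 := by
  have := Fact.mk hq
  have : Group.IsSolvable N := hNs
  have hq5 : ¬ q ∣ 5 := fun h => hqG (h.trans (five_dvd_card_of_quotient_mulEquiv N hquot))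
  exact order3_fpf_implies_order5_fpf_general N hquot hp (fun h => hp' (Or.inr (Or.inr h))) hpN h5p
    (fun _ => eq_zero_of_nsmul_eq_zero_of_not_dvd hq5) h3
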